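/- arXiv:2005.09407 — 3 statements merged into one kernel-verified Lean document; each statement's English description precedes it below -/
import Mathlib

section
/- For each ε ∈ (0,1) there exists a smooth function u : ℝ² → ℝ such that Δu(x,t) = 1 for all (x,t) ∈ [0,1]², and |{(x,t) ∈ [0,1]² : |u(x,t)| ≤ ε}| ≥ 1 − ε. -/
open MeasureTheory Set ENNReal

/-- The Laplacian `Δu = ∂²u/∂x² + ∂²u/∂t²` of a function `u : ℝ² → ℝ`. -/
noncomputable def laplacian2 (u : ℝ × ℝ → ℝ) (z : ℝ × ℝ) : ℝ :=
  iteratedDeriv 2 (fun a => u (a, z.2)) z.1 + iteratedDeriv 2 (fun b => u (z.1, b)) z.2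

lemma aux_exp {A : Type*} [NormedCommRing A] [NormedAlgebra ℂ A] [CompleteSpace A] (w : A) :
    ∃ e : A, ∀ ev : A →ₐ[ℂ] ℂ, Continuous ev → ev e = Complex.exp (ev w) := by
  let _ : NormedAlgebra ℚ A := NormedAlgebra.restrictScalars ℚ ℂ A
  refine ⟨NormedSpace.exp w, fun ev hev => ?_⟩
  rw [Complex.exp_eq_exp_ℂ]
  exact NormedSpace.map_exp ev hev w

lemma aux_inv {A : Type*} [NormedCommRing A] [NormedAlgebra ℂ A] [CompleteSpace A] (ι : A) (n c : ℂ)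
    (hc : ∀ z ∈ spectrum ℂ ι, 1 + Complex.exp (n * (c - z)) ≠ 0) :
    ∃ f : A, ∀ ev : A →ₐ[ℂ] ℂ, Continuous ev →
      ev f * (1 + Complex.exp (n * (c - ev ι))) = 1 := by
  obtain ⟨e, he⟩ := aux_exp (n • (algebraMap ℂ A c - ι))
  have he' : ∀ ev : A →ₐ[ℂ] ℂ, Continuous ev → ev (1 + e) = 1 + Complex.exp (n * (c - ev ι)) := by
    intro ev hev
    rw [map_add, map_one, he ev hev, map_smul, map_sub, AlgHom.commutes, smul_eq_mul]
    rfl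
  have hg : IsUnit (1 + e) := by
    by_contra hg
    obtain ⟨φ, hφ⟩ := WeakDual.CharacterSpace.exists_apply_eq_zero hg
    have h1 : φ ι ∈ spectrum ℂ ι :=
      WeakDual.CharacterSpace.mem_spectrum_iff_exists.2 ⟨φ, rfl⟩
    apply hc _ h1
    rw [← hφ]
    exact (he' (WeakDual.CharacterSpace.equivAlgHom φ) (map_continuous φ)).symm
  obtain ⟨f, hf⟩ := hg.exists_left_inv
  refine ⟨f, fun ev hev => ?_⟩
  rw [← he' ev hev, ← map_mul, hf, map_one]

lemma aux_recip (K : Set ℂ) [CompactSpace K] (hK : IsPreconnected Kᶜ) (S : Subalgebra ℂ C(K, ℂ))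
    (hS : IsClosed (S : Set C(K, ℂ))) (ι : S) (hι : ∀ x : K, (ι : C(K, ℂ)) x = x) (n c : ℂ)
    (hc : ∀ z ∈ K, 1 + Complex.exp (n * (c - z)) ≠ 0) :
    ∃ f ∈ S, ∀ x : K, f x * (1 + Complex.exp (n * (c - x))) = 1 := by
  have := hS
  have : CompleteSpace S := hS.completeSpace_coe
  let _ : NormedCommRing S := { (inferInstance : NormedRing S) with mul_comm := mul_comm }
  have hsp : spectrum ℂ (ι : C(K, ℂ)) = K := by
    rw [ContinuousMap.spectrum_eq_range]
    ext z
    constructor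
    · rintro ⟨x, rfl⟩
      rw [hι]; exact x.2
    · intro hz
      exact ⟨⟨z, hz⟩, hι _⟩
  have hsp2 : spectrum ℂ ι = K := by
    rw [Subalgebra.spectrum_eq_of_isPreconnected_compl S ι (by rw [hsp]; exact hK), hsp]
  obtain ⟨f, hf⟩ := aux_inv ι n c (fun z hz => hc z (hsp2.subset hz))
  refine ⟨f, f.2, fun x => ?_⟩
  have h := hf ((ContinuousMap.evalAlgHom ℂ ℂ x).comp S.val)
    ((continuous_eval_const x).comp continuous_subtype_val)
  have h2 : ((ContinuousMap.evalAlgHom ℂ ℂ x).comp S.val) ι = x := hι x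
  rw [h2] at h
  exact h

lemma aux_step (X : Set ℝ) (K : Set ℂ) [CompactSpace K] (hK : IsPreconnected Kᶜ)
    (hX : IsClosed X) (hKX : ∀ z ∈ K, z.re ∈ X)
    (S : Subalgebra ℂ C(K, ℂ))
    (hS : IsClosed (S : Set C(K, ℂ))) (ι : S) (hι : ∀ x : K, (ι : C(K, ℂ)) x = x) (c : ℝ)
    (hc : c ∉ X) :
    ∃ f ∈ S, ∀ x : K, f x = if c < (x : ℂ).re then 1 else 0 := by
  obtain ⟨d, hd, hball⟩ := Metric.isOpen_iff.1 hX.isOpen_compl c hc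
  have hsep : ∀ z ∈ K, d ≤ |z.re - c| := by
    intro z hz
    by_contra! h
    exact hball (by simpa [Real.dist_eq] using h) (hKX z hz)
  have hne : ∀ z ∈ K, z.re ≠ c := fun z hz h => hc (h ▸ hKX z hz)
  have hcont : Continuous (fun x : K => if c < (x : ℂ).re then (1 : ℂ) else 0) := by
    refine continuous_const.if ?_ continuous_const
    intro a ha
    exfalso
    have h1 := frontier_lt_subset_eq continuous_const (Complex.continuous_re.comp continuous_subtype_val) ha
    exact hne a a.2 h1.symm
  let F : C(K, ℂ) := ⟨_, hcont⟩
  refine ⟨F, ?_, fun x => rfl⟩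
  have key : ∀ n : ℕ, 0 < n → ∃ f ∈ S, ‖F - f‖ ≤ Real.exp (-(n * d)) / (1 - Real.exp (-(n * d))) := by
    intro n hn
    have hn' : (0 : ℝ) < n := by exact_mod_cast hn
    have hq : Real.exp (-(n * d)) < 1 := by
      rw [Real.exp_lt_one_iff]; nlinarith [mul_pos hn' hd]
    set q := Real.exp (-(n * d)) with hqdef
    have hq0 : 0 < q := Real.exp_pos _
    have hnorm : ∀ z : ℂ, ‖Complex.exp (n * (c - z))‖ = Real.exp (n * (c - z.re)) := by
      intro z
      rw [Complex.norm_exp]; simp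
    obtain ⟨f, hfS, hf⟩ := aux_recip K hK S hS ι hι n c (by
      intro z hz h
      have h1 : Complex.exp (n * (c - z)) = -1 := by linear_combination h
      have h2 := hnorm z
      rw [h1] at h2
      simp only [norm_neg, norm_one] at h2
      have h3 := (Real.exp_eq_one_iff _).1 h2.symm
      have h4 := hne z hz
      rcases mul_eq_zero.1 h3 with h | h
      · linarith
      · apply h4; linarith)
    refine ⟨f, hfS, ?_⟩
    rw [ContinuousMap.norm_le _ (by have : 0 < 1 - q := by linarith
                                    positivity)]
    intro x
    have hfx := hf x
    have hnx := hnorm x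
    set e := Complex.exp (n * (c - x)) with he
    have hsx := hsep x x.2
    have hFx : F x = if c < (x : ℂ).re then 1 else 0 := rfl
    rw [ContinuousMap.sub_apply, hFx]
    have h1e : (1 + e) ≠ 0 := right_ne_zero_of_mul_eq_one hfx
    have hfx' : f x = 1 / (1 + e) := by field_simp; exact hfx
    split_ifs with h
    · rw [abs_of_pos (by linarith)] at hsx
      have heq : ‖e‖ ≤ q := by
        rw [hnx, hqdef]; apply Real.exp_le_exp.2; nlinarith
      have h2 : 1 - q ≤ ‖1 + e‖ := by
        have := norm_sub_le (1 + e) e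
        simp at this; linarith
      have : 1 - f x = e / (1 + e) := by rw [hfx']; field_simp; ring
      rw [this, norm_div]
      have : 0 < 1 - q := by linarith
      gcongr
    · have : (x : ℂ).re - c ≤ 0 := by linarith
      rw [abs_of_nonpos this] at hsx
      have heq : 1 / q ≤ ‖e‖ := by
        rw [hnx, hqdef, one_div, ← Real.exp_neg]; apply Real.exp_le_exp.2; nlinarith
      have h2 : 1 / q - 1 ≤ ‖1 + e‖ := by
        have := norm_sub_le (1 + e) 1
        simp at this; linarith
      rw [hfx', zero_sub, norm_neg, norm_div, norm_one]
      have h5 : q / (1 - q) = 1 / (1 / q - 1) := by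
        have : 1 - q ≠ 0 := by linarith
        field_simp
      rw [h5]
      have : 0 < 1 / q - 1 := by
        have := one_lt_one_div hq0 hq
        linarith
      gcongr
  have hmem : F ∈ closure (S : Set C(K, ℂ)) := by
    rw [Metric.mem_closure_iff]
    intro r hr
    have ht : Filter.Tendsto (fun n : ℕ => Real.exp (-(n * d)) / (1 - Real.exp (-(n * d))))
        Filter.atTop (nhds (0 / (1 - 0))) := by
      have : Filter.Tendsto (fun n : ℕ => Real.exp (-(n * d))) Filter.atTop (nhds 0) := by
        refine Real.tendsto_exp_neg_atTop_nhds_zero.comp ?_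
        exact tendsto_natCast_atTop_atTop.atTop_mul_const hd
      exact this.div (tendsto_const_nhds.sub this) (by norm_num)
    rw [zero_div] at ht
    obtain ⟨n, hn, hn0⟩ := ((ht.eventually (gt_mem_nhds hr)).and (Filter.eventually_gt_atTop 0)).exists
    obtain ⟨f, hf, hff⟩ := key n hn0
    exact ⟨f, hf, by rw [dist_eq_norm]; linarith⟩
  rwa [hS.closure_eq] at hmem

lemma aux_count (M : ℕ) (hM : 0 < M) (x : ℝ) (hx : x ∈ Set.Icc (0:ℝ) 1) :
    |(∑ j ∈ Finset.Icc 1 M, if ((j : ℝ) / M) < x then (1 : ℝ) else 0) / M - x| ≤ 1 / M := by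
  have hM' : (0 : ℝ) < M := by exact_mod_cast hM
  obtain ⟨hx0, hx1⟩ := hx
  have hset : (Finset.Icc 1 M).filter (fun j : ℕ => ((j : ℝ) / M) < x) = Finset.Ico 1 ⌈M * x⌉₊ := by
    ext j
    simp only [Finset.mem_filter, Finset.mem_Icc, Finset.mem_Ico, Nat.lt_ceil, div_lt_iff₀ hM']
    constructor
    · rintro ⟨⟨h1, h2⟩, h3⟩
      exact ⟨h1, by linarith⟩
    · rintro ⟨h1, h3⟩
      refine ⟨⟨h1, ?_⟩, by linarith⟩
      have : (j : ℝ) ≤ M := by nlinarith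
      exact_mod_cast this
  rw [← Finset.sum_filter, hset, Finset.sum_const, Nat.card_Ico, nsmul_eq_mul, mul_one]
  have hc1 := Nat.le_ceil (M * x)
  have hc2 := Nat.ceil_lt_add_one (show 0 ≤ M * x by positivity)
  have hb1 : ((⌈M * x⌉₊ - 1 : ℕ) : ℝ) ≤ M * x := by
    rcases Nat.eq_zero_or_pos ⌈M * x⌉₊ with h | h
    · rw [h]; simp; positivity
    · rw [Nat.cast_sub h]; push_cast; linarith
  have hb2 : M * x - 1 ≤ ((⌈M * x⌉₊ - 1 : ℕ) : ℝ) := by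
    have : (⌈M * x⌉₊ : ℝ) ≤ ((⌈M * x⌉₊ - 1 : ℕ) : ℝ) + 1 := by
      exact_mod_cast (by omega : ⌈M * x⌉₊ ≤ (⌈M * x⌉₊ - 1) + 1)
    linarith
  rw [div_sub' hM'.ne', abs_div, abs_of_pos hM']
  gcongr
  rw [abs_le]; constructor <;> linarith

lemma aux_conn (X : Set ℝ) (hXc : (Xᶜ).Nonempty) : IsPreconnected {z : ℂ | z.re ∈ X ∧ z.im ∈ Set.Icc (0:ℝ) 1}ᶜ := by
  have hup : IsPreconnected {z : ℂ | 1 < z.im} := (convex_halfSpace_im_gt 1).isPreconnected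
  have hdn : IsPreconnected {z : ℂ | z.im < 0} := (convex_halfSpace_im_lt 0).isPreconnected
  have hline : ∀ c : ℝ, IsPreconnected {z : ℂ | z.re = c} := fun c =>
    (convex_hyperplane Complex.reLm.isLinear c).isPreconnected
  obtain ⟨c₀, hc₀⟩ := hXc
  have hL : ∀ c : ℝ, IsPreconnected ({z : ℂ | 1 < z.im} ∪ {z : ℂ | z.re = c} ∪ {z : ℂ | z.im < 0}) := by
    intro c
    refine IsPreconnected.union (⟨c, -1⟩ : ℂ) (by simp) (by simp) 
      (IsPreconnected.union (⟨c, 2⟩ : ℂ) (by simp) (by simp) hup (hline c)) hdn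
  have hU : {z : ℂ | z.re ∈ X ∧ z.im ∈ Set.Icc (0:ℝ) 1}ᶜ =
      ⋃ c : (Xᶜ : Set ℝ), ({z : ℂ | 1 < z.im} ∪ {z : ℂ | z.re = c} ∪ {z : ℂ | z.im < 0}) := by
    ext z
    simp only [Set.mem_compl_iff, Set.mem_ofPred_eq, Set.mem_iUnion, Set.mem_union, Set.mem_Icc]
    constructor
    · intro h
      by_cases hz : z.re ∈ X
      · refine ⟨⟨c₀, hc₀⟩, ?_⟩
        by_contra! h'
        exact h ⟨hz, h'.2, h'.1.1⟩
      · exact ⟨⟨z.re, hz⟩, Or.inl (Or.inr rfl)⟩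
    · rintro ⟨⟨c, hc⟩, (h | h) | h⟩ ⟨h1, h2, h3⟩
      · linarith
      · exact hc ((show z.re = c from h) ▸ h1)
      · linarith
  rw [hU]
  exact isPreconnected_iUnion (⟨⟨0, 2⟩, by simp⟩) (fun c => hL c)

lemma aux_poly (X : Set ℝ) (hX : IsClosed X) (hX1 : X ⊆ Set.Icc 0 1) (hq : ∀ q : ℚ, (q : ℝ) ∉ X)
    (ε : ℝ) (hε : 0 < ε) :
    ∃ p : Polynomial ℂ, ∀ x ∈ X, ∀ t ∈ Set.Icc (0:ℝ) 1,
      |(p.eval ((x : ℂ) + t * Complex.I)).re - x ^ 2| ≤ ε := by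
  set K : Set ℂ := {z : ℂ | z.re ∈ X ∧ z.im ∈ Set.Icc (0:ℝ) 1} with hKdef
  have hKc : IsCompact K := by
    have : K = X ×ℂ Set.Icc (0:ℝ) 1 := rfl
    rw [this]
    exact (isCompact_Icc.of_isClosed_subset hX hX1).reProdIm isCompact_Icc
  have : CompactSpace K := isCompact_iff_compactSpace.1 hKc
  have hconn : IsPreconnected Kᶜ := aux_conn X ⟨0, by simpa using hq 0⟩
  let S : Subalgebra ℂ C(K, ℂ) := (polynomialFunctions K).topologicalClosure
  have hS : IsClosed (S : Set C(K, ℂ)) := Subalgebra.isClosed_topologicalClosure _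
  let ι : S := ⟨Polynomial.toContinuousMapOnAlgHom K Polynomial.X,
    Subalgebra.le_topologicalClosure _ (by
      rw [← SetLike.mem_coe, polynomialFunctions_coe]; exact ⟨_, rfl⟩)⟩
  have hι : ∀ x : K, (ι : C(K, ℂ)) x = x := by
    intro x
    simp [ι]
  obtain ⟨M, hM⟩ := exists_nat_gt (3 / ε)
  have hM0 : (0:ℝ) < M := lt_trans (by positivity) hM
  have hM1 : 0 < M := by exact_mod_cast hM0
  have hstep : ∀ j : ℕ, ∃ f ∈ S, ∀ x : K, f x = if (j : ℝ) / M < (x : ℂ).re then 1 else 0 := by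
    intro j
    exact aux_step X K hconn hX (fun z hz => hz.1) S hS ι hι _ (by simpa using hq ((j : ℚ) / M))
  choose f hfS hf using hstep
  let s : C(K, ℂ) := (1 / (M : ℂ)) • ∑ j ∈ Finset.Icc 1 M, f j
  have hsS : s ∈ S := S.smul_mem (S.sum_mem fun j _ => hfS j) _
  have hs2 : s ^ 2 ∈ closure (polynomialFunctions K : Set C(K, ℂ)) := S.pow_mem hsS 2
  obtain ⟨g, hg, hgd⟩ := Metric.mem_closure_iff.1 hs2 (1 / M) (by positivity)
  rw [polynomialFunctions_coe] at hg
  obtain ⟨p, rfl⟩ := hg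
  refine ⟨p, fun x hx t ht => ?_⟩
  let z : K := ⟨(x : ℂ) + t * Complex.I, by simpa [hKdef] using ⟨hx, ht⟩⟩
  have hzre : (z : ℂ).re = x := by simp [z]
  set σ : ℝ := (∑ j ∈ Finset.Icc 1 M, if ((j : ℝ) / M) < x then (1 : ℝ) else 0) / M with hσ
  have hsz : s z = (σ : ℂ) := by
    simp only [s, ContinuousMap.smul_apply, ContinuousMap.sum_apply, hf, hzre, hσ, smul_eq_mul]
    push_cast
    rw [div_mul_eq_mul_div, one_mul]
    congr 1
    refine Finset.sum_congr rfl fun j _ => ?_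
    split_ifs <;> simp
  have h1 := aux_count M hM1 x (hX1 hx)
  rw [← hσ] at h1
  have h2 := (ContinuousMap.dist_apply_le_dist (f := s ^ 2)
    (g := Polynomial.toContinuousMapOnAlgHom K p) z).trans hgd.le
  have h3 : (Polynomial.toContinuousMapOnAlgHom K p) z = p.eval ((x : ℂ) + t * Complex.I) := by
    simp [z]
  rw [ContinuousMap.pow_apply, hsz, h3, dist_eq_norm, norm_sub_rev] at h2
  have h4 := (Complex.abs_re_le_norm _).trans h2
  have h5 : ((p.eval ((x : ℂ) + t * Complex.I)) - (σ : ℂ) ^ 2).re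
      = (p.eval ((x : ℂ) + t * Complex.I)).re - σ ^ 2 := by
    rw [Complex.sub_re, ← Complex.ofReal_pow, Complex.ofReal_re]
  rw [h5] at h4
  have hMle : 1 / (M : ℝ) ≤ ε / 3 := by
    rw [div_lt_iff₀ hε] at hM
    rw [div_le_div_iff₀ hM0 (by norm_num)]
    linarith
  have hx01 := hX1 hx
  have hσ0 : 0 ≤ σ := by
    rw [hσ]; positivity
  have hσ1 : σ ≤ 1 := by
    rw [hσ, div_le_one hM0]
    calc _ ≤ ∑ j ∈ Finset.Icc 1 M, (1 : ℝ) := by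
          gcongr; split_ifs <;> norm_num
      _ = M := by simp
  rw [abs_le] at h1 h4 ⊢
  have h6 := hx01.1
  have h7 := hx01.2
  constructor <;> nlinarith

lemma aux_hasDeriv_x (p : Polynomial ℂ) (t x : ℝ) :
    HasDerivAt (fun a : ℝ => p.eval ((a : ℂ) + t * Complex.I))
      (p.derivative.eval ((x : ℂ) + t * Complex.I)) x := by
  have h1 : HasDerivAt (fun a : ℝ => (a : ℂ) + t * Complex.I) 1 x :=
    (Complex.ofRealCLM.hasDerivAt (x := x)).add_const _
  have h2 := (p.hasDerivAt ((x : ℂ) + t * Complex.I)).comp x h1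
  rw [mul_one] at h2
  exact h2

lemma aux_hasDeriv_t (p : Polynomial ℂ) (x t : ℝ) :
    HasDerivAt (fun b : ℝ => p.eval ((x : ℂ) + b * Complex.I))
      (p.derivative.eval ((x : ℂ) + t * Complex.I) * Complex.I) t := by
  have h1 : HasDerivAt (fun b : ℝ => (x : ℂ) + b * Complex.I) (1 * Complex.I) t :=
    ((Complex.ofRealCLM.hasDerivAt (x := t)).mul_const _).const_add _
  have h2 := (p.hasDerivAt ((x : ℂ) + t * Complex.I)).comp t h1
  rw [one_mul] at h2
  exact h2

lemma aux_re {f : ℝ → ℂ} {f' : ℂ} {x : ℝ} (h : HasDerivAt f f' x) :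
    HasDerivAt (fun a => (f a).re) f'.re x :=
  (Complex.reCLM.hasFDerivAt.comp_hasDerivAt x h)

lemma aux_lap (p : Polynomial ℂ) (z : ℝ × ℝ) :
    laplacian2 (fun z => (z.1 ^ 2 - (p.eval ((z.1 : ℂ) + z.2 * Complex.I)).re) / 2) z = 1 := by
  obtain ⟨x, t⟩ := z
  unfold laplacian2
  simp only [iteratedDeriv_succ, iteratedDeriv_zero]
  have e1 : deriv (fun a : ℝ => (a ^ 2 - (p.eval ((a : ℂ) + t * Complex.I)).re) / 2) =
      fun a : ℝ => (2 * a - (p.derivative.eval ((a : ℂ) + t * Complex.I)).re) / 2 := by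
    funext a
    refine HasDerivAt.deriv ?_
    simpa using ((hasDerivAt_pow 2 a).sub (aux_re (aux_hasDeriv_x p t a))).div_const 2
  have e2 : deriv (fun b : ℝ => (x ^ 2 - (p.eval ((x : ℂ) + b * Complex.I)).re) / 2) =
      fun b : ℝ => (0 - (p.derivative.eval ((x : ℂ) + b * Complex.I) * Complex.I).re) / 2 := by
    funext b
    refine HasDerivAt.deriv ?_
    exact ((hasDerivAt_const b (x ^ 2)).sub (aux_re (aux_hasDeriv_t p x b))).div_const 2
  have e3 := ((((hasDerivAt_id x).const_mul 2).sub
    (aux_re (aux_hasDeriv_x p.derivative t x))).div_const 2).deriv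
  have e4 := (((hasDerivAt_const t (0:ℝ)).sub
    (aux_re ((aux_hasDeriv_t p.derivative x t).mul_const Complex.I))).div_const 2).deriv
  rw [e1, e2]
  refine (congrArg₂ (· + ·) e3 e4).trans ?_
  simp [mul_assoc]
  ring

/-- Carbery–Christ–Wright counterexample for the Laplacian. For each
`ε ∈ (0,1)` there is a smooth `u : ℝ² → ℝ` with `Δu ≡ 1` on the unit square `[0,1]²` and
`|{(x,t) ∈ [0,1]² : |u(x,t)| ≤ ε}| ≥ 1 − ε`. -/
theorem laplacian_no_uniform_sublevel (ε : ℝ) (hε : ε ∈ Set.Ioo (0 : ℝ) 1) :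
    ∃ u : ℝ × ℝ → ℝ, ContDiff ℝ (⊤ : ℕ∞) u ∧
      (∀ z ∈ (Set.Icc (0 : ℝ) 1) ×ˢ (Set.Icc (0 : ℝ) 1), laplacian2 u z = 1) ∧
      ENNReal.ofReal (1 - ε) ≤
        volume {z ∈ (Set.Icc (0 : ℝ) 1) ×ˢ (Set.Icc (0 : ℝ) 1) | |u z| ≤ ε} := by
  obtain ⟨h0, h1⟩ := hε
  obtain ⟨U, hUq, hUo, hUv⟩ := (Set.range ((↑) : ℚ → ℝ)).exists_isOpen_lt_of_lt
    (μ := volume) (ENNReal.ofReal ε) (by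
      rw [(Set.countable_range _).measure_zero]; simpa using h0)
  obtain ⟨p, hp⟩ := aux_poly (Set.Icc 0 1 \ U) (isClosed_Icc.sdiff hUo) Set.sdiff_subset
    (fun q hq => hq.2 (hUq ⟨q, rfl⟩)) ε h0
  refine ⟨fun z => (z.1 ^ 2 - (p.eval ((z.1 : ℂ) + z.2 * Complex.I)).re) / 2, ?_,
    fun z _ => aux_lap p z, ?_⟩
  · have hpc : ContDiff ℝ (⊤ : ℕ∞) (fun w : ℂ => p.eval w) := by
      have : ContDiff ℂ (⊤ : ℕ∞) (fun w : ℂ => p.eval w) := by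
        simpa using Polynomial.contDiff_aeval p (𝕜 := ℂ) (n := (⊤ : ℕ∞))
      exact this.restrict_scalars ℝ
    have hin : ContDiff ℝ (⊤ : ℕ∞) (fun z : ℝ × ℝ => (z.1 : ℂ) + z.2 * Complex.I) :=
      (Complex.ofRealCLM.contDiff.comp contDiff_fst).add
        ((Complex.ofRealCLM.contDiff.comp contDiff_snd).mul contDiff_const)
    exact ((contDiff_fst.pow 2).sub (Complex.reCLM.contDiff.comp (hpc.comp hin))).div_const 2
  · calc ENNReal.ofReal (1 - ε) = ENNReal.ofReal 1 - ENNReal.ofReal ε :=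
          ENNReal.ofReal_sub _ h0.le
      _ ≤ volume (Set.Icc (0:ℝ) 1) - volume U := by
          apply tsub_le_tsub _ hUv.le
          simp
      _ ≤ volume (Set.Icc (0:ℝ) 1 \ U) := le_measure_sdiff
      _ = volume ((Set.Icc (0:ℝ) 1 \ U) ×ˢ (Set.Icc (0:ℝ) 1)) := by
          rw [Measure.volume_eq_prod, Measure.prod_prod]; simp
      _ ≤ _ := by
          apply measure_mono
          rintro ⟨x, t⟩ ⟨hx, ht⟩
          refine ⟨⟨hx.1, ht⟩, ?_⟩
          have := hp x hx t ht
          simp only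
          rw [abs_div, abs_sub_comm, abs_two]
          linarith
end

section
/- For each ε ∈ (0,1) there exists a smooth function u : ℝ² → ℝ such that Hu(x,t) = 1 for all (x,t) ∈ [0,1]², where H = ∂²/∂x² − ∂/∂t is the one-spatial-dimensional heat operator, and |{(x,t) ∈ [0,1]² : |u(x,t)| ≤ ε}| ≥ 1 − ε. -/
open MeasureTheory Set ENNReal

/-- The one-spatial-dimensional heat operator `Hu = ∂²u/∂x² − ∂u/∂t` for `u : ℝ² → ℝ`,
where points are written `(x,t)`. -/
noncomputable def heatOp1 (u : ℝ × ℝ → ℝ) (z : ℝ × ℝ) : ℝ :=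
  iteratedDeriv 2 (fun a => u (a, z.2)) z.1 - deriv (fun b => u (z.1, b)) z.2

open Polynomial in
theorem poly_antideriv (Q : ℝ[X]) : ∃ B : ℝ[X], derivative B = Q := by
  induction Q using Polynomial.induction_on' with
  | add p q hp hq =>
    obtain ⟨a, ha⟩ := hp
    obtain ⟨b, hb⟩ := hq
    exact ⟨a + b, by simp [ha, hb]⟩
  | monomial n a =>
    refine ⟨monomial (n + 1) (a / (n + 1)), ?_⟩
    rw [derivative_monomial]
    have : (n : ℝ) + 1 ≠ 0 := by positivity
    simp only [Nat.add_sub_cancel]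
    congr 1
    push_cast
    field_simp

open Polynomial in
theorem step_poly (d : ℝ) (hd : 0 < d) (hd1 : d < 1) (δ : ℝ) (hδ : 0 < δ) :
    ∃ A : ℝ[X], (∀ x ∈ Icc (-1) (-d), |A.eval x| ≤ δ) ∧ (∀ x ∈ Icc d 1, |A.eval x - 1| ≤ δ) ∧
      ∀ x : ℝ, d ≤ |x| → |x| ≤ 1 → ∀ z : ℂ, ‖z - x‖ ≤ d ^ 2 / 6 → ‖aeval z (derivative A)‖ ≤ δ := by
  have hd2 : d ^ 2 < 1 := by nlinarith
  have hd0 : 0 < d ^ 2 := by positivity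
  set q : ℝ := 1 - d ^ 2 / 2 with hq
  set s : ℝ := 1 - d ^ 2 / 4 with hs
  have hq0 : 0 < q := by linarith
  have hs0 : 0 < s := by linarith
  have hqs : q / s < 1 := by rw [div_lt_one hs0]; linarith
  obtain ⟨N, hN⟩ := exists_pow_lt_of_lt_one (mul_pos hδ hd) hqs
  rw [div_pow, div_lt_iff₀ (by positivity)] at hN
  obtain ⟨B, hB⟩ := poly_antideriv ((1 - X ^ 2) ^ N)
  have hder : ∀ x, deriv (fun y => B.eval y) x = (1 - x ^ 2) ^ N := by
    intro x
    rw [Polynomial.deriv, hB]; simp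
  have hmono : ∀ x ∈ Icc (-1 : ℝ) 1, ∀ y ∈ Icc (-1 : ℝ) 1, x ≤ y → 0 ≤ B.eval y - B.eval x := by
    intro x hx y hy hxy
    have := (convex_Icc (-1 : ℝ) 1).mul_sub_le_image_sub_of_le_deriv (f := fun y => B.eval y)
      (C := 0) B.continuous.continuousOn B.differentiable.differentiableOn (by
        intro x hx
        rw [interior_Icc] at hx
        rw [hder]
        apply pow_nonneg
        nlinarith [hx.1, hx.2]) x hx y hy hxy
    simpa using this
  have hmid : s ^ N * (d / 2 - (- (d / 2))) ≤ B.eval (d / 2) - B.eval (- (d / 2)) := by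
    refine (convex_Icc (- (d / 2)) (d / 2)).mul_sub_le_image_sub_of_le_deriv
      (f := fun y => B.eval y)
      B.continuous.continuousOn B.differentiable.differentiableOn (by
        intro x hx
        rw [interior_Icc] at hx
        rw [hder]
        apply pow_le_pow_left₀ hs0.le
        nlinarith [hx.1, hx.2]) _ ?_ _ ?_ ?_
    · constructor <;> linarith
    · constructor <;> linarith
    · linarith
  have hsmall : ∀ a b : ℝ, -1 ≤ a → a ≤ b → b ≤ 1 → (b ≤ -d ∨ d ≤ a) →
      B.eval b - B.eval a ≤ q ^ N := by
    intro a b ha hab hb hor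
    have h := (convex_Icc a b).image_sub_le_mul_sub_of_deriv_le (f := fun y => B.eval y) (C := q ^ N)
      B.continuous.continuousOn B.differentiable.differentiableOn (by
        intro x hx
        rw [interior_Icc] at hx
        rw [hder]
        apply pow_le_pow_left₀
        · nlinarith [hx.1, hx.2]
        · rcases hor with h | h <;> nlinarith [hx.1, hx.2]) a ⟨le_rfl, hab⟩ b ⟨hab, le_rfl⟩ hab
    have h0 : 0 < q ^ N := by positivity
    rcases hor with h' | h' <;> nlinarith
  set L : ℝ := B.eval 1 - B.eval (-1) with hL
  have hLs : s ^ N * d ≤ L := by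
    have h1 := hmono (-1) (by constructor <;> linarith) (-(d/2)) (by constructor <;> linarith) (by linarith)
    have h2 := hmono (d/2) (by constructor <;> linarith) 1 (by constructor <;> linarith) (by linarith)
    nlinarith
  have hL0 : 0 < L := lt_of_lt_of_le (by positivity) hLs
  have hkey : q ^ N ≤ δ * L := by nlinarith
  refine ⟨C (1 / L) * (B - C (B.eval (-1))), ?_, ?_, ?_⟩
  · intro x hx
    have h1 := hsmall (-1) x le_rfl hx.1 (by linarith [hx.2]) (Or.inl hx.2)
    have h2 := hmono (-1) (by constructor <;> linarith) x ⟨hx.1, by linarith [hx.2]⟩ hx.1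
    simp only [eval_mul, eval_C, eval_sub]
    rw [one_div_mul_eq_div, abs_of_nonneg (by positivity), div_le_iff₀ hL0]
    linarith
  · intro x hx
    have h1 := hsmall x 1 (by linarith [hx.1]) hx.2 le_rfl (Or.inr hx.1)
    have h2 := hmono x ⟨by linarith [hx.1], hx.2⟩ 1 (by constructor <;> linarith) hx.2
    simp only [eval_mul, eval_C, eval_sub]
    have : 1 / L * (B.eval x - B.eval (-1)) - 1 = - ((B.eval 1 - B.eval x) / L) := by
      field_simp
      rw [hL]; ring
    rw [this, abs_neg, abs_of_nonneg (by positivity), div_le_iff₀ hL0]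
    linarith
  · intro x hx hx1 z hz
    have e : aeval z (derivative (C (1 / L) * (B - C (B.eval (-1))))) =
        ((1 / L : ℝ) : ℂ) * (1 - z ^ 2) ^ N := by
      simp [hB, derivative_mul]
    rw [e, norm_mul, norm_pow, Complex.norm_real, Real.norm_of_nonneg (by positivity),
      one_div_mul_eq_div, div_le_iff₀ hL0]
    refine le_trans (pow_le_pow_left₀ (norm_nonneg _) ?_ N) hkey
    have e2 : 1 - z ^ 2 = ((1 - x ^ 2 : ℝ) : ℂ) - (2 * x * (z - x) + (z - x) ^ 2) := by
      push_cast; ring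
    rw [e2]
    refine (norm_sub_le _ _).trans ?_
    have n1 : ‖((1 - x ^ 2 : ℝ) : ℂ)‖ ≤ 1 - d ^ 2 := by
      rw [Complex.norm_real, Real.norm_of_nonneg]
      · rw [← sq_abs x]; nlinarith
      · rw [← sq_abs x]; nlinarith [abs_nonneg x]
    have n2 : ‖2 * (x : ℂ) * (z - x) + (z - x) ^ 2‖ ≤ 3 * (d ^ 2 / 6) := by
      refine (norm_add_le _ _).trans ?_
      rw [norm_mul, norm_mul, norm_pow, Complex.norm_real, Real.norm_eq_abs]
      simp only [Complex.norm_ofNat]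
      have := norm_nonneg (z - x)
      have : |x| * ‖z - x‖ ≤ 1 * (d ^ 2 / 6) := by gcongr
      nlinarith
    linarith

open Polynomial in
theorem stair_poly (m : ℕ) (hm : 0 < m) (d : ℝ) (hd : 0 < d) (hd1 : d < 1) (δ : ℝ) (hδ : 0 < δ) :
    ∃ p : ℝ[X], ∀ t ∈ Icc (0 : ℝ) 1, (∀ i < m, d ≤ |t - (i + 1 / 2) / m|) →
      |p.eval t - t| ≤ δ + 1 / (2 * m) ∧
      ∀ z : ℂ, ‖z - t‖ ≤ d ^ 2 / 6 → ‖aeval z (derivative p)‖ ≤ δ := by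
  obtain ⟨A, hA0, hA1, hA2⟩ := step_poly d hd hd1 δ hδ
  have hm' : (0 : ℝ) < m := by exact_mod_cast hm
  have hm0 : (m : ℝ) ≠ 0 := hm'.ne'
  set s : ℕ → ℝ := fun i => ((i : ℝ) + 1 / 2) / m with hs
  refine ⟨∑ i ∈ Finset.range m, C (1 / (m : ℝ)) * A.comp (X - C (s i)), ?_⟩
  intro t ht hgood
  have hle : ∀ i < m, |t - s i| ≤ 1 := by
    intro i hi
    have hi' : (i : ℝ) + 1 ≤ m := by exact_mod_cast hi
    have h0 : 0 ≤ s i := by simp only [hs]; positivity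
    have h1 : s i ≤ 1 := by simp only [hs]; rw [div_le_one hm']; linarith
    rw [abs_le]; constructor <;> linarith [ht.1, ht.2]
  constructor
  · set j : ℕ := ⌊m * t + 1 / 2⌋₊ with hj
    have hnn : 0 ≤ (m : ℝ) * t + 1 / 2 := by have := mul_nonneg hm'.le ht.1; linarith
    have hj1 : (j : ℝ) ≤ m * t + 1 / 2 := Nat.floor_le hnn
    have hj2 : (m : ℝ) * t + 1 / 2 < j + 1 := Nat.lt_floor_add_one _
    have hjm : j ≤ m := by
      have : (j : ℝ) < m + 1 := by nlinarith [ht.2]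
      have : j < m + 1 := by exact_mod_cast this
      omega
    have hstep : ∀ i ∈ Finset.range m,
        |A.eval (t - s i) - (if i < j then 1 else 0)| ≤ δ := by
      intro i hi
      have hi := Finset.mem_range.1 hi
      have hg := hgood i hi
      have hl := hle i hi
      rw [abs_le] at hl
      split_ifs with hij
      · have : ((i : ℝ) + 1) ≤ j := by exact_mod_cast hij
        have : s i ≤ t := by
          simp only [hs]; rw [div_le_iff₀ hm']; linarith
        rw [abs_of_nonneg (by simpa [hs] using this)] at hg
        exact hA1 _ ⟨hg, hl.2⟩
      · have : (j : ℝ) ≤ i := by exact_mod_cast (not_lt.1 hij)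
        have : t ≤ s i := by
          simp only [hs]; rw [le_div_iff₀ hm']; linarith
        rw [abs_of_nonpos (by simpa [hs] using this)] at hg
        rw [sub_zero]
        exact hA0 _ ⟨hl.1, by simp only [hs]; linarith⟩
    have hcount : ∑ i ∈ Finset.range m, (if i < j then (1 : ℝ) else 0) = j := by
      rw [← Finset.sum_filter]
      have : (Finset.range m).filter (fun i => i < j) = Finset.range j := by
        ext i; simp; omega
      simp [this]
    have hsum : |∑ i ∈ Finset.range m, A.eval (t - s i) - j| ≤ m * δ := by
      rw [← hcount, ← Finset.sum_sub_distrib]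
      refine (Finset.abs_sum_le_sum_abs _ _).trans ?_
      refine (Finset.sum_le_sum hstep).trans ?_
      simp
    have hev : eval t (∑ i ∈ Finset.range m, C (1 / (m : ℝ)) * A.comp (X - C (s i))) =
        1 / m * ∑ i ∈ Finset.range m, A.eval (t - s i) := by
      rw [eval_finsetSum, Finset.mul_sum]
      simp
    rw [hev]
    have e : 1 / (m : ℝ) * ∑ i ∈ Finset.range m, A.eval (t - s i) - t =
        ((∑ i ∈ Finset.range m, A.eval (t - s i) - j) + (j - m * t)) / m := by
      field_simp; ring
    rw [e, abs_div, abs_of_pos hm', div_le_iff₀ hm']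
    have e2 : (δ + 1 / (2 * (m : ℝ))) * m = m * δ + 1 / 2 := by field_simp
    rw [e2]
    refine (abs_add_le _ _).trans (add_le_add hsum ?_)
    rw [abs_le]; constructor <;> linarith
  · intro z hz
    have e : aeval z (derivative (∑ i ∈ Finset.range m, C (1 / (m : ℝ)) * A.comp (X - C (s i)))) =
        ∑ i ∈ Finset.range m, ((1 / m : ℝ) : ℂ) * aeval (z - (s i : ℂ)) (derivative A) := by
      simp [derivative_comp, aeval_comp]
    rw [e]
    refine (norm_sum_le _ _).trans ?_
    have : ∀ i ∈ Finset.range m,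
        ‖((1 / m : ℝ) : ℂ) * aeval (z - (s i : ℂ)) (derivative A)‖ ≤ 1 / m * δ := by
      intro i hi
      have hi := Finset.mem_range.1 hi
      rw [norm_mul, Complex.norm_real, Real.norm_of_nonneg (by positivity)]
      gcongr
      refine hA2 (t - s i) (hgood i hi) (hle i hi) _ ?_
      convert hz using 2
      push_cast; ring
    refine (Finset.sum_le_sum this).trans ?_
    simp [hm0]

open Polynomial in
theorem iter_bound (p : ℝ[X]) (t r M : ℝ) (hr : 0 < r)
    (h : ∀ z : ℂ, ‖z - t‖ ≤ r → ‖aeval z (derivative p)‖ ≤ M) (k : ℕ) :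
    |(derivative^[k + 1] p).eval t| ≤ k.factorial * M / r ^ k := by
  have hit : ∀ k : ℕ, iteratedDeriv k (fun z : ℂ => aeval z (derivative p)) =
      fun z => aeval z (derivative^[k + 1] p) := by
    intro k
    induction k with
    | zero => simp
    | succ k ih =>
      rw [iteratedDeriv_succ, ih]
      ext z
      rw [Polynomial.deriv_aeval, Function.iterate_succ_apply' _ (k + 1)]
  have := Complex.norm_iteratedDeriv_le_of_forall_mem_sphere_norm_le (c := (t : ℂ)) (R := r)
    (C := M) (f := fun z : ℂ => aeval z (derivative p)) k hr
    (Polynomial.differentiable_aeval _).diffContOnCl (by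
      intro z hz
      exact h z (by rw [mem_sphere_iff_norm] at hz; exact hz.le))
  rw [hit] at this
  have e : aeval (t : ℂ) (derivative^[k + 1] p) = (((derivative^[k + 1] p).eval t : ℝ) : ℂ) := by
    have := Polynomial.aeval_algebraMap_apply ℂ t (derivative^[k + 1] p)
    simpa using this
  simp only [e, Complex.norm_real, Real.norm_eq_abs] at this
  exact this

open Polynomial in
/-- The caloric extension of a polynomial in time. -/
noncomputable def calExt (p : ℝ[X]) (z : ℝ × ℝ) : ℝ :=
  ∑ k ∈ Finset.range (p.natDegree + 1),
    (derivative^[k] p).eval z.2 * (z.1 ^ (2 * k) / (2 * k).factorial)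

open Polynomial in
theorem calExt_bound (p : ℝ[X]) (x t r M : ℝ) (hr : 0 < r) (hM : 0 ≤ M) (hx : |x| ≤ 1)
    (h : ∀ z : ℂ, ‖z - t‖ ≤ r → ‖aeval z (derivative p)‖ ≤ M) :
    |calExt p (x, t) - p.eval t| ≤ M * Real.exp (1 / r) := by
  unfold calExt
  rw [Finset.sum_range_succ']
  simp only [Function.iterate_zero, id, mul_zero, pow_zero, Nat.factorial_zero, Nat.cast_one,
    div_one, mul_one, add_sub_cancel_right]
  refine (Finset.abs_sum_le_sum_abs _ _).trans ?_
  refine le_trans (Finset.sum_le_sum (g := fun k => M * ((1 / r) ^ k / k.factorial)) ?_) ?_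
  · intro k _
    have hb := iter_bound p t r M hr h k
    rw [abs_mul]
    have h1 : |x ^ (2 * (k + 1)) / ((2 * (k + 1)).factorial : ℝ)| ≤
        1 / ((k.factorial : ℝ) * k.factorial) := by
      rw [abs_div, abs_pow, Nat.abs_cast]
      have hf : (k.factorial : ℝ) * k.factorial ≤ (2 * (k + 1)).factorial := by
        have h1 := Nat.le_of_dvd (Nat.factorial_pos _)
          (Nat.factorial_mul_factorial_dvd_factorial_add k k)
        have h2 : (k + k).factorial ≤ (2 * (k + 1)).factorial := Nat.factorial_le (by omega)
        exact_mod_cast h1.trans h2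
      gcongr
      exact pow_le_one₀ (abs_nonneg _) hx
    refine (mul_le_mul hb h1 (abs_nonneg _) (by positivity)).trans (le_of_eq ?_)
    have : (k.factorial : ℝ) ≠ 0 := by positivity
    rw [one_div_pow]
    field_simp
  · rw [← Finset.mul_sum]
    gcongr
    exact Real.sum_le_exp_of_nonneg (by positivity) _

open Polynomial in
theorem calExt_contDiff (p : ℝ[X]) : ContDiff ℝ (⊤ : ℕ∞) (calExt p) := by
  unfold calExt
  refine ContDiff.sum fun k _ => ?_
  refine ContDiff.mul ((Polynomial.contDiff_aeval (𝕜 := ℝ) _ _).comp contDiff_snd) ?_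
  exact (contDiff_fst.pow _).div_const _

open Polynomial in
theorem heat_calc (p : ℝ[X]) (z : ℝ × ℝ) : heatOp1 (fun w => calExt p w - w.2) z = 1 := by
  obtain ⟨x, t⟩ := z
  unfold heatOp1 calExt
  simp only
  set n := p.natDegree with hn
  set c : ℕ → ℝ := fun k => (derivative^[k] p).eval t with hc
  have ht : HasDerivAt (fun b => ∑ k ∈ Finset.range (n + 1),
      (derivative^[k] p).eval b * (x ^ (2 * k) / (2 * k).factorial) - b)
      (∑ k ∈ Finset.range (n + 1), c (k + 1) * (x ^ (2 * k) / (2 * k).factorial) - 1) t := by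
    refine HasDerivAt.sub (HasDerivAt.fun_sum fun k _ => ?_) (hasDerivAt_id t)
    refine HasDerivAt.mul_const ?_ _
    simp only [hc, Function.iterate_succ_apply']
    exact Polynomial.hasDerivAt _ _
  have hmon : ∀ (k : ℕ) (a : ℝ), HasDerivAt (fun y : ℝ => y ^ (k + 1) / ((k + 1).factorial : ℝ))
      (a ^ k / (k.factorial : ℝ)) a := by
    intro k a
    have := (hasDerivAt_pow (k + 1) a).div_const ((k + 1).factorial : ℝ)
    refine this.congr_deriv ?_
    have : (k.factorial : ℝ) ≠ 0 := by positivity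
    rw [Nat.factorial_succ]
    push_cast
    field_simp
  have hx1 : deriv (fun a => ∑ k ∈ Finset.range (n + 1),
      c k * (a ^ (2 * k) / ((2 * k).factorial : ℝ)) - t) =
      fun a => ∑ k ∈ Finset.range n, c (k + 1) * (a ^ (2 * k + 1) / ((2 * k + 1).factorial : ℝ)) := by
    ext a
    apply HasDerivAt.deriv
    simp only [Finset.sum_range_succ' _ n, mul_zero, pow_zero]
    refine HasDerivAt.sub_const _ (HasDerivAt.add_const _ (HasDerivAt.fun_sum fun k _ => ?_))
    exact (hmon (2 * k + 1) a).const_mul _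
  have hx2 : deriv (fun a => ∑ k ∈ Finset.range n,
      c (k + 1) * (a ^ (2 * k + 1) / ((2 * k + 1).factorial : ℝ))) x =
      ∑ k ∈ Finset.range n, c (k + 1) * (x ^ (2 * k) / ((2 * k).factorial : ℝ)) := by
    apply HasDerivAt.deriv
    exact HasDerivAt.fun_sum fun k _ => (hmon (2 * k) x).const_mul _
  rw [ht.deriv, iteratedDeriv_succ, iteratedDeriv_one, hx1, hx2, Finset.sum_range_succ]
  have : c (n + 1) = 0 := by
    simp only [hc]
    rw [Polynomial.iterate_derivative_eq_zero (by omega)]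
    simp
  rw [this]; ring

/-- failure of uniform sublevel set estimates for the heat operator. For
each `ε ∈ (0,1)` there is a smooth `u : ℝ² → ℝ` with `Hu ≡ 1` on the unit square `[0,1]²`
and `|{(x,t) ∈ [0,1]² : |u(x,t)| ≤ ε}| ≥ 1 − ε`. -/
theorem heat_no_uniform_sublevel (ε : ℝ) (hε : ε ∈ Set.Ioo (0 : ℝ) 1) :
    ∃ u : ℝ × ℝ → ℝ, ContDiff ℝ (⊤ : ℕ∞) u ∧
      (∀ z ∈ (Set.Icc (0 : ℝ) 1) ×ˢ (Set.Icc (0 : ℝ) 1), heatOp1 u z = 1) ∧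
      ENNReal.ofReal (1 - ε) ≤
        volume {z ∈ (Set.Icc (0 : ℝ) 1) ×ˢ (Set.Icc (0 : ℝ) 1) | |u z| ≤ ε} := by
  obtain ⟨h0, h1⟩ := hε
  obtain ⟨n, hn⟩ := exists_nat_gt (1 / ε)
  have hn0 : (0 : ℝ) < n := lt_trans (by positivity) hn
  have hnpos : 0 < n := by exact_mod_cast hn0
  have hn1 : (1 : ℝ) ≤ n := by exact_mod_cast hnpos
  have hnε : 1 / (2 * (n : ℝ)) ≤ ε / 2 := by
    rw [div_lt_iff₀ h0] at hn
    rw [div_le_div_iff₀ (by positivity) (by positivity)]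
    nlinarith
  set d : ℝ := ε / (2 * n) with hd
  have hd0 : 0 < d := by positivity
  have hd1 : d < 1 := by rw [hd, div_lt_one (by positivity)]; linarith
  set r : ℝ := d ^ 2 / 6 with hr
  have hr0 : 0 < r := by positivity
  set δ : ℝ := ε / 4 * Real.exp (-(1 / r)) with hδ
  have hδ0 : 0 < δ := by positivity
  have hδ1 : δ ≤ ε / 4 := by
    have : Real.exp (-(1 / r)) ≤ 1 := Real.exp_le_one_iff.2 (by simp; positivity)
    rw [hδ]; nlinarith
  have hδ2 : δ * Real.exp (1 / r) = ε / 4 := by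
    rw [hδ, mul_assoc, ← Real.exp_add]; simp
  obtain ⟨p, hp⟩ := stair_poly n hnpos d hd0 hd1 δ hδ0
  refine ⟨fun w => calExt p w - w.2, (calExt_contDiff p).sub contDiff_snd,
    fun z _ => heat_calc p z, ?_⟩
  set U : Set ℝ := ⋃ i ∈ Finset.range n, Metric.ball (((i : ℝ) + 1 / 2) / n) d with hU
  have hsub : Icc (0 : ℝ) 1 ×ˢ (Icc (0 : ℝ) 1 \ U) ⊆
      {z ∈ (Set.Icc (0 : ℝ) 1) ×ˢ (Set.Icc (0 : ℝ) 1) | |calExt p z - z.2| ≤ ε} := by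
    rintro ⟨x, t⟩ ⟨hx, ht, htU⟩
    refine ⟨⟨hx, ht⟩, ?_⟩
    simp only at hx ht htU ⊢
    obtain ⟨ha, hb⟩ := hp t ht (by
      intro i hi
      by_contra hlt
      apply htU
      simp only [hU, mem_iUnion, Finset.mem_range, Metric.mem_ball, Real.dist_eq]
      exact ⟨i, hi, not_le.1 hlt⟩)
    have hc := calExt_bound p x t r δ hr0 hδ0.le (abs_le.2 ⟨by linarith [hx.1], hx.2⟩) hb
    rw [hδ2] at hc
    have := abs_add_le (calExt p (x, t) - p.eval t) (p.eval t - t)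
    rw [sub_add_sub_cancel] at this
    linarith
  refine le_trans ?_ (measure_mono hsub)
  rw [Measure.volume_eq_prod, Measure.prod_prod, Real.volume_Icc]
  simp only [sub_zero, ENNReal.ofReal_one, one_mul]
  have hUv : volume U ≤ ENNReal.ofReal ε := by
    refine (measure_biUnion_finset_le _ _).trans ?_
    simp only [Real.volume_ball, Finset.sum_const, Finset.card_range, nsmul_eq_mul]
    rw [← ENNReal.ofReal_natCast, ← ENNReal.ofReal_mul hn0.le]
    apply ENNReal.ofReal_le_ofReal
    rw [hd]
    apply le_of_eq
    field_simp
  calc ENNReal.ofReal (1 - ε) = 1 - ENNReal.ofReal ε := by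
        rw [ENNReal.ofReal_sub _ h0.le, ENNReal.ofReal_one]
    _ ≤ volume (Icc (0 : ℝ) 1) - volume U := by
        rw [Real.volume_Icc]
        simp only [sub_zero, ENNReal.ofReal_one]
        exact tsub_le_tsub_left hUv _
    _ ≤ volume (Icc (0 : ℝ) 1 \ U) := le_measure_sdiff
end

section
/- Let Ω ⊆ ℝⁿ be open, let u be smooth on Ω, and suppose the closed ball of radius R centred at x is contained in Ω. Define φ : [0,R] → ℝ by φ(0) = u(x) and φ(r) = (1/|B_r|) ∫_{B_r(x)} u(y) dy for 0 < r ≤ R, where B_r(x) is the open Euclidean ball of radius r centred at x and |B_r| its Lebesgue measure. Then φ is continuous on [0,R], and for every r ∈ (0,R), φ'(r) = (1/|B_r|) ∫_{B_r(x)} ((r² − |x−y|²)/(2r)) Δu(y) dy. -/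
open MeasureTheory Metric Set ENNReal

/-- The Laplacian `Δu = Σᵢ ∂²u/∂xᵢ²` of a function `u : ℝⁿ → ℝ`. -/
noncomputable def laplacian {n : ℕ} (u : EuclideanSpace ℝ (Fin n) → ℝ)
    (x : EuclideanSpace ℝ (Fin n)) : ℝ :=
  ∑ i : Fin n,
    fderiv ℝ (fun y => fderiv ℝ u y (EuclideanSpace.single i 1)) x (EuclideanSpace.single i 1)

open scoped Pointwise in
lemma ball_scale {n : ℕ} (x : EuclideanSpace ℝ (Fin n)) (F : EuclideanSpace ℝ (Fin n) → ℝ)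
    {r : ℝ} (hr : 0 < r) :
    ((volume (ball x r)).toReal)⁻¹ * ∫ y in ball x r, F y =
    ((volume (ball (0 : EuclideanSpace ℝ (Fin n)) 1)).toReal)⁻¹ *
      ∫ z in ball (0 : EuclideanSpace ℝ (Fin n)) 1, F (x + r • z) := by
  have h1 := Measure.setIntegral_comp_smul_of_pos (volume : Measure (EuclideanSpace ℝ (Fin n)))
    (fun z => F (x + z)) (ball 0 1) hr
  have h2 : ∫ y in ball x r, F y = ∫ y in ball (0 : EuclideanSpace ℝ (Fin n)) r, F (x + y) := by
    have := (measurePreserving_add_left (volume : Measure (EuclideanSpace ℝ (Fin n))) x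
      ).setIntegral_preimage_emb (measurableEmbedding_addLeft x) F (ball x r)
    rw [← this]
    congr 2
    ext z; simp [dist_eq_norm]
  have h3 : r • ball (0 : EuclideanSpace ℝ (Fin n)) 1 = ball 0 r := by
    rw [smul_unitBall_of_pos hr]
  rw [h3] at h1
  rw [h1, h2, Measure.addHaar_ball_of_pos _ x hr, ENNReal.toReal_mul,
    ENNReal.toReal_ofReal (by positivity), smul_eq_mul, mul_inv]
  ring

noncomputable def gcut {n : ℕ} (z : EuclideanSpace ℝ (Fin n)) : ℝ := (1 - (min 1 ‖z‖) ^ 2) / 2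

lemma gcut_lip {n : ℕ} : LipschitzWith 1 (gcut (n := n)) := by
  refine LipschitzWith.of_dist_le_mul fun y z => ?_
  have h1 : |min 1 ‖y‖ - min 1 ‖z‖| ≤ dist y z := by
    have h := abs_min_sub_min_le_max (1 : ℝ) ‖y‖ 1 ‖z‖
    have h' := abs_norm_sub_norm_le y z
    rw [dist_eq_norm]
    refine h.trans (max_le (by simp) h')
  simp only [NNReal.coe_one, one_mul, Real.dist_eq, gcut]
  refine le_trans ?_ h1
  have a0 : 0 ≤ min 1 ‖y‖ := le_min zero_le_one (norm_nonneg _)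
  have b0 : 0 ≤ min 1 ‖z‖ := le_min zero_le_one (norm_nonneg _)
  have a1 : min 1 ‖y‖ ≤ 1 := min_le_left _ _
  have b1 : min 1 ‖z‖ ≤ 1 := min_le_left _ _
  generalize min 1 ‖y‖ = a at *
  generalize min 1 ‖z‖ = b at *
  have : (1 - a ^ 2) / 2 - (1 - b ^ 2) / 2 = - ((a - b) * ((a + b) / 2)) := by ring
  rw [this, abs_neg, abs_mul, abs_of_nonneg (by positivity : 0 ≤ (a + b) / 2)]
  exact mul_le_of_le_one_right (abs_nonneg _) (by linarith)

lemma gcut_in {n : ℕ} {z : EuclideanSpace ℝ (Fin n)} (hz : z ∈ ball 0 1) :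
    gcut z = (1 - ‖z‖ ^ 2) / 2 := by
  have : ‖z‖ < 1 := by simpa using hz
  simp [gcut, min_eq_right this.le]

lemma gcut_out {n : ℕ} {z : EuclideanSpace ℝ (Fin n)} (hz : z ∉ ball 0 1) :
    gcut z = 0 := by
  have : 1 ≤ ‖z‖ := by simpa using hz
  simp [gcut, min_eq_left this]

lemma gcut_supp {n : ℕ} : HasCompactSupport (gcut (n := n)) := by
  refine HasCompactSupport.intro (isCompact_closedBall 0 1) fun z hz => gcut_out fun h => hz ?_
  exact ball_subset_closedBall h

lemma gcut_lineDeriv_in {n : ℕ} {z v : EuclideanSpace ℝ (Fin n)} (hz : z ∈ ball 0 1) :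
    lineDeriv ℝ gcut z v = - inner ℝ z v := by
  have h : (gcut (n := n)) =ᶠ[nhds z] fun z => (1 - ‖z‖ ^ 2) / 2 := by
    filter_upwards [isOpen_ball.mem_nhds hz] with y hy using gcut_in hy
  have h2 : HasFDerivAt (fun z : EuclideanSpace ℝ (Fin n) => (1 - ‖z‖ ^ 2) / 2)
      ((2:ℝ)⁻¹ • (-((2:ℝ) • innerSL ℝ z) : EuclideanSpace ℝ (Fin n) →L[ℝ] ℝ)) z := by
    have := ((hasStrictFDerivAt_norm_sq z).hasFDerivAt.const_sub 1).mul_const (2:ℝ)⁻¹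
    simp only [div_eq_mul_inv]
    refine this.congr_fderiv ?_
    ext w
    simp
  have h3 := (h2.congr_of_eventuallyEq h).hasLineDerivAt v
  rw [h3.lineDeriv]
  simp

lemma gcut_lineDeriv_out {n : ℕ} {z v : EuclideanSpace ℝ (Fin n)} (hz : z ∉ closedBall 0 1) :
    lineDeriv ℝ gcut z v = 0 := by
  have h : (gcut (n := n)) =ᶠ[nhds z] fun z => 0 := by
    filter_upwards [isClosed_closedBall.isOpen_compl.mem_nhds hz] with y hy
    exact gcut_out fun h => hy (ball_subset_closedBall h)
  rw [(((hasFDerivAt_const (0:ℝ) z).congr_of_eventuallyEq h).hasLineDerivAt v).lineDeriv]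
  simp

lemma ibp {n : ℕ} (f : EuclideanSpace ℝ (Fin n) → ℝ) (hf : ContDiff ℝ 1 f)
    (hc : HasCompactSupport f) (v : EuclideanSpace ℝ (Fin n)) :
    ∫ z in ball (0 : EuclideanSpace ℝ (Fin n)) 1, inner ℝ z v * f z =
    ∫ z in ball (0 : EuclideanSpace ℝ (Fin n)) 1, ((1 - ‖z‖ ^ 2) / 2) * fderiv ℝ f z v := by
  by_cases hn : Nonempty (Fin n)
  swap
  · have : IsEmpty (Fin n) := not_nonempty_iff.mp hn
    have hv : v = 0 := Subsingleton.elim _ _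
    simp [hv]
  obtain ⟨C, hC⟩ := hf.lipschitzWith_of_hasCompactSupport hc (by simp)
  have key := LipschitzWith.integral_lineDeriv_mul_eq (μ := volume) hC gcut_lip gcut_supp v
  have hL : ∫ z, lineDeriv ℝ f z v * gcut z =
      ∫ z in ball (0 : EuclideanSpace ℝ (Fin n)) 1, ((1 - ‖z‖ ^ 2) / 2) * fderiv ℝ f z v := by
    rw [← integral_indicator measurableSet_ball]
    congr 1
    ext z
    by_cases hz : z ∈ ball (0 : EuclideanSpace ℝ (Fin n)) 1
    · rw [indicator_of_mem hz, gcut_in hz,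
        ((hf.differentiable (by simp)).differentiableAt).lineDeriv_eq_fderiv, mul_comm]
    · rw [indicator_of_notMem hz, gcut_out hz, mul_zero]
  have hRt : ∫ z, lineDeriv ℝ gcut z (-v) * f z =
      ∫ z in ball (0 : EuclideanSpace ℝ (Fin n)) 1, inner ℝ z v * f z := by
    rw [← integral_indicator measurableSet_ball]
    refine integral_congr_ae ?_
    have h0 : volume (sphere (0 : EuclideanSpace ℝ (Fin n)) 1) = 0 :=
      Measure.addHaar_sphere _ _ _
    filter_upwards [measure_eq_zero_iff_ae_notMem.mp h0] with z hs
    by_cases hz : z ∈ ball (0 : EuclideanSpace ℝ (Fin n)) 1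
    · rw [indicator_of_mem hz, gcut_lineDeriv_in hz]; simp
    · rw [indicator_of_notMem hz, gcut_lineDeriv_out, zero_mul]
      intro h
      rw [← ball_union_sphere] at h
      exact h.elim hz hs
  rw [← hRt, ← key, hL]

lemma psi_deriv {n : ℕ} (v : EuclideanSpace ℝ (Fin n) → ℝ) (hv : ContDiff ℝ (⊤ : ℕ∞) v)
    (hc : HasCompactSupport v) (x : EuclideanSpace ℝ (Fin n)) (r : ℝ) :
    HasDerivAt (fun r : ℝ => ∫ z in ball (0 : EuclideanSpace ℝ (Fin n)) 1, v (x + r • z))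
      (∫ z in ball (0 : EuclideanSpace ℝ (Fin n)) 1, fderiv ℝ v (x + r • z) z) r := by
  have hfc : Continuous (fderiv ℝ v) := hv.continuous_fderiv (by simp)
  obtain ⟨C, hC⟩ := (hc.fderiv (𝕜 := ℝ)).exists_bound_of_continuous hfc
  have hfin : IsFiniteMeasure (volume.restrict (ball (0 : EuclideanSpace ℝ (Fin n)) 1)) :=
    ⟨by simpa using measure_ball_lt_top⟩
  have hint : ∀ F : EuclideanSpace ℝ (Fin n) → ℝ, Continuous F →
      IntegrableOn F (ball 0 1) volume := fun F hF =>
    (hF.continuousOn.integrableOn_compact (isCompact_closedBall 0 1)).mono_set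
      ball_subset_closedBall
  have hcv := hv.continuous
  refine (hasDerivAt_integral_of_dominated_loc_of_deriv_le (bound := fun _ => C)
    (F' := fun r z => fderiv ℝ v (x + r • z) z) (s := univ) Filter.univ_mem ?_ ?_ ?_ ?_ ?_ ?_).2
  · exact Filter.Eventually.of_forall fun s =>
      (by fun_prop : Continuous fun z => v (x + s • z)).aestronglyMeasurable
  · exact hint _ (by fun_prop)
  · exact (by fun_prop : Continuous fun z => fderiv ℝ v (x + r • z) z).aestronglyMeasurable
  · filter_upwards [ae_restrict_mem measurableSet_ball] with z hz s _
    have hz1 : ‖z‖ ≤ 1 := by simpa using (ball_subset_closedBall hz)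
    calc _ ≤ ‖fderiv ℝ v (x + s • z)‖ * ‖z‖ := ContinuousLinearMap.le_opNorm _ _
      _ ≤ ‖fderiv ℝ v (x + s • z)‖ * 1 := by gcongr
      _ ≤ C := by rw [mul_one]; exact hC _
  · exact integrable_const _
  · refine Filter.Eventually.of_forall fun z s _ => ?_
    have h1 : HasDerivAt (fun s : ℝ => x + s • z) z s := by
      simpa using ((hasDerivAt_id s).smul_const z).const_add x
    exact ((hv.differentiable (by simp)) (x + s • z)).hasFDerivAt.comp_hasDerivAt s h1

lemma psi_deriv_eq {n : ℕ} (v : EuclideanSpace ℝ (Fin n) → ℝ) (hv : ContDiff ℝ (⊤ : ℕ∞) v)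
    (hc : HasCompactSupport v) (x : EuclideanSpace ℝ (Fin n)) {r : ℝ} (hr : 0 < r) :
    ∫ z in ball (0 : EuclideanSpace ℝ (Fin n)) 1, fderiv ℝ v (x + r • z) z =
    ∫ z in ball (0 : EuclideanSpace ℝ (Fin n)) 1,
      ((r ^ 2 - ‖x - (x + r • z)‖ ^ 2) / (2 * r)) * laplacian v (x + r • z) := by
  have hint : ∀ F : EuclideanSpace ℝ (Fin n) → ℝ, Continuous F →
      IntegrableOn F (ball 0 1) volume := fun F hF =>
    (hF.continuousOn.integrableOn_compact (isCompact_closedBall 0 1)).mono_set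
      ball_subset_closedBall
  let e : Fin n → EuclideanSpace ℝ (Fin n) := fun i => EuclideanSpace.single i 1
  let D : Fin n → EuclideanSpace ℝ (Fin n) → ℝ := fun i y => fderiv ℝ v y (e i)
  have hD : ∀ i, ContDiff ℝ 1 (D i) := fun i =>
    (hv.fderiv_right (m := 1) (by norm_cast)).clm_apply contDiff_const
  have hDc : ∀ i, HasCompactSupport (D i) := fun i => hc.fderiv_apply (𝕜 := ℝ) (e i)
  let f : Fin n → EuclideanSpace ℝ (Fin n) → ℝ := fun i z => D i (x + r • z)
  have hf : ∀ i, ContDiff ℝ 1 (f i) := fun i => (hD i).comp (by fun_prop)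
  have hfc : ∀ i, HasCompactSupport (f i) := fun i => by
    have h := (hDc i).comp_homeomorph
      ((Homeomorph.smulOfNeZero r hr.ne').trans (Homeomorph.addLeft x))
    exact h
  have hfd : ∀ i z, fderiv ℝ (f i) z (e i) = r * fderiv ℝ (D i) (x + r • z) (e i) := by
    intro i z
    have h1 : HasFDerivAt (fun z : EuclideanSpace ℝ (Fin n) => x + r • z)
      (r • ContinuousLinearMap.id ℝ _) z := ((hasFDerivAt_id z).const_smul r).const_add x
    have h2 := (((hD i).differentiable (by simp)) (x + r • z)).hasFDerivAt.comp z h1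
    have h3 : fderiv ℝ (f i) z = _ := h2.fderiv
    rw [h3]; simp
  have hDf : ∀ i, Continuous fun z => fderiv ℝ (D i) (x + r • z) (e i) := by
    intro i
    have := (hD i).continuous_fderiv (by simp)
    fun_prop
  have hfcont := fun i => (hf i).continuous
  have hA : ∀ z, fderiv ℝ v (x + r • z) z = ∑ i, inner ℝ z (e i) * f i z := by
    intro z
    have hz : z = ∑ i, inner ℝ z (e i) • e i := by
      have := (EuclideanSpace.basisFun (Fin n) ℝ).sum_repr' z
      conv_lhs => rw [← this]
      simp [e, EuclideanSpace.basisFun_apply, real_inner_comm]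
    conv_lhs => rw [hz]
    rw [map_sum]
    simp only [map_smul, smul_eq_mul]
    rw [← hz]
  have hB : ∀ z, ((r ^ 2 - ‖x - (x + r • z)‖ ^ 2) / (2 * r)) * laplacian v (x + r • z) =
      ∑ i, ((1 - ‖z‖ ^ 2) / 2) * fderiv ℝ (f i) z (e i) := by
    intro z
    have : ‖x - (x + r • z)‖ = r * ‖z‖ := by
      rw [sub_add_cancel_left, norm_neg, norm_smul, Real.norm_of_nonneg hr.le]
    rw [this, laplacian, Finset.mul_sum]
    refine Finset.sum_congr rfl fun i _ => ?_
    rw [hfd]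
    change _ * fderiv ℝ (D i) (x + r • z) (e i) = _
    field_simp
  simp_rw [hA, hB]
  rw [integral_finsetSum, integral_finsetSum]
  · exact Finset.sum_congr rfl fun i _ => ibp (f i) (hf i) (hfc i) (e i)
  · intro i _
    simp_rw [hfd]
    have := hDf i
    exact hint _ (by fun_prop)
  · intro i _
    have := hfcont i
    exact hint _ (by fun_prop)

lemma exists_global {n : ℕ} (Ω : Set (EuclideanSpace ℝ (Fin n))) (hΩ : IsOpen Ω)
    (u : EuclideanSpace ℝ (Fin n) → ℝ) (hu : ContDiffOn ℝ (⊤ : ℕ∞) u Ω)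
    (x : EuclideanSpace ℝ (Fin n)) (R : ℝ) (hR : 0 < R) (hball : closedBall x R ⊆ Ω) :
    ∃ v : EuclideanSpace ℝ (Fin n) → ℝ, ContDiff ℝ (⊤ : ℕ∞) v ∧ HasCompactSupport v ∧
      ∀ y ∈ closedBall x R, v y = u y := by
  obtain ⟨δ, hδ, hsub⟩ := (isCompact_closedBall x R).exists_cthickening_subset_open hΩ hball
  rw [cthickening_closedBall hδ.le hR.le] at hsub
  let b : ContDiffBump x := ⟨R, R + δ, hR, by linarith⟩
  have hts : tsupport b ⊆ Ω := by
    rw [b.tsupport_eq]; simpa [b, add_comm] using hsub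
  refine ⟨fun y => b y * u y, ?_, ?_, ?_⟩
  · rw [contDiff_iff_contDiffAt]
    intro y
    by_cases hy : y ∈ Ω
    · exact b.contDiff.contDiffAt.mul (hu.contDiffAt (hΩ.mem_nhds hy))
    · have : (fun y => b y * u y) =ᶠ[nhds y] fun _ => 0 := by
        filter_upwards [(isClosed_tsupport b).isOpen_compl.mem_nhds fun h => hy (hts h)] with z hz
        rw [image_eq_zero_of_notMem_tsupport hz, zero_mul]
      exact contDiffAt_const.congr_of_eventuallyEq this
  · exact b.hasCompactSupport.mul_right
  · intro y hy
    change b y * u y = u y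
    rw [b.one_of_mem_closedBall hy, one_mul]

theorem ball_average_deriv (n : ℕ) (Ω : Set (EuclideanSpace ℝ (Fin n))) (hΩ : IsOpen Ω)
    (u : EuclideanSpace ℝ (Fin n) → ℝ) (hu : ContDiffOn ℝ (⊤ : ℕ∞) u Ω)
    (x : EuclideanSpace ℝ (Fin n)) (R : ℝ) (hR : 0 < R) (hball : closedBall x R ⊆ Ω)
    (φ : ℝ → ℝ)
    (hφ : ∀ r : ℝ, φ r =
      if r = 0 then u x else ((volume (ball x r)).toReal)⁻¹ * ∫ y in ball x r, u y) :
    ContinuousOn φ (Icc 0 R) ∧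
      ∀ r ∈ Ioo 0 R,
        HasDerivAt φ
          (((volume (ball x r)).toReal)⁻¹ *
            ∫ y in ball x r, ((r ^ 2 - ‖x - y‖ ^ 2) / (2 * r)) * laplacian u y) r := by
  obtain ⟨v, hv, hc, hvu⟩ := exists_global Ω hΩ u hu x R hR hball
  let c : ℝ := ((volume (ball (0 : EuclideanSpace ℝ (Fin n)) 1)).toReal)⁻¹
  let ψ : ℝ → ℝ := fun r =>
    c * ∫ z in ball (0 : EuclideanSpace ℝ (Fin n)) 1, v (x + r • z)
  have hψ : ∀ r, HasDerivAt ψ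
      (c * ∫ z in ball (0 : EuclideanSpace ℝ (Fin n)) 1, fderiv ℝ v (x + r • z) z) r :=
    fun r => (psi_deriv v hv hc x r).const_mul c
  have hpos : 0 < (volume (ball (0 : EuclideanSpace ℝ (Fin n)) 1)).toReal :=
    ENNReal.toReal_pos (measure_ball_pos _ _ one_pos).ne' measure_ball_lt_top.ne
  have heq : ∀ r ∈ Icc 0 R, φ r = ψ r := by
    intro r hr
    rw [hφ]
    split_ifs with h
    · subst h
      simp only [ψ, c, zero_smul, add_zero, setIntegral_const, smul_eq_mul, Measure.real]
      rw [inv_mul_cancel_left₀ hpos.ne', hvu x (mem_closedBall_self hR.le)]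
    · have hr0 : 0 < r := lt_of_le_of_ne hr.1 (Ne.symm h)
      change _ = c * ∫ z in ball (0 : EuclideanSpace ℝ (Fin n)) 1, v (x + r • z)
      rw [← ball_scale x v hr0]
      congr 1
      refine setIntegral_congr_fun measurableSet_ball fun y hy => ?_
      exact (hvu y (closedBall_subset_closedBall hr.2 (ball_subset_closedBall hy))).symm
  refine ⟨?_, ?_⟩
  · exact ContinuousOn.congr (fun r _ => (hψ r).continuousAt.continuousWithinAt) heq
  · intro r hr
    have h1 : φ =ᶠ[nhds r] ψ := by
      filter_upwards [isOpen_Ioo.mem_nhds hr] with s hs using heq s (Ioo_subset_Icc_self hs)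
    refine ((hψ r).congr_of_eventuallyEq h1).congr_deriv ?_
    symm
    rw [psi_deriv_eq v hv hc x hr.1, ← ball_scale x
      (fun y => ((r ^ 2 - ‖x - y‖ ^ 2) / (2 * r)) * laplacian v y) hr.1]
    congr 1
    refine setIntegral_congr_fun measurableSet_ball fun y hy => ?_
    have hyR : y ∈ ball x R := ball_subset_ball hr.2.le hy
    have hl : laplacian u y = laplacian v y := by
      unfold laplacian
      refine Finset.sum_congr rfl fun i _ => ?_
      have : (fun y => fderiv ℝ u y (EuclideanSpace.single i 1)) =ᶠ[nhds y]
          (fun y => fderiv ℝ v y (EuclideanSpace.single i 1)) := by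
        filter_upwards [isOpen_ball.mem_nhds hyR] with w hw
        have : u =ᶠ[nhds w] v := by
          filter_upwards [isOpen_ball.mem_nhds hw] with w' hw'
          exact (hvu w' (ball_subset_closedBall hw')).symm
        rw [this.fderiv_eq]
      rw [this.fderiv_eq]
    simp only [hl]
end
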